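/- Let k be a field of characteristic 0. Then every finite field extension E of k((x))((t)) is induced by a finite field extension of k((t))(x): there exists a finite field extension E' of the rational function field k((t))(x) such that E' ⊗_{k((t))(x)} k((x))((t)) is isomorphic to E as a k((x))((t))-algebra. -/

import Mathlib

open scoped TensorProduct

attribute [local instance] Algebra.TensorProduct.rightAlgebra

/-- The ring homomorphism `k₁((t)) →+* k₂((t))` applying a ring homomorphism
`f : k₁ →+* k₂` to each coefficient of a Laurent series. -/
noncomputable def lsMap {R S : Type*} [CommRing R] [CommRing S]
    (f : R →+* S) : LaurentSeries R →+* LaurentSeries S where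
  toFun x := x.map f
  map_one' := by ext g; by_cases h : g = 0 <;> simp [h]
  map_mul' x y := HahnSeries.map_mul f.toNonUnitalRingHom
  map_zero' := by ext g; simp
  map_add' x y := HahnSeries.map_add f.toAddMonoidHom

/-- A type synonym for the Laurent series field `k((x))`, so that `k((x))((t))` is
`LaurentSeries (Kx k)`. -/
def Kx (k : Type) [Field k] : Type := LaurentSeries k

noncomputable instance (k : Type) [Field k] : Field (Kx k) :=
  inferInstanceAs (Field (LaurentSeries k))

/-!
In characteristic zero the integral closure of `ℓ⟦t⟧` in a finite extension `E` of `ℓ((t))` contains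
a copy of its residue field `κ`, and its elements congruent to `1` modulo the maximal ideal have
`N`-th roots for every `N ≠ 0`. Hence `E` is generated over `ℓ((t))` by `κ` and a uniformizer `s`
with `s ^ e = u t`, `u ∈ κ`, and every element of `E` has the form `c s ^ m v ^ N` with `c ∈ κ`.
Multiplying `s` by an element of `κ` changes `u` by an `e`-th power. So if `κ` comes from a finite
extension `M` of a subfield `F₀` of `ℓ`, and every element of `κ` lies in `M` up to `e`-th powers,
then `E` is generated by `M` and an `e`-th root `s` of some `u t` with `u ∈ M`, hence comes from an
extension of `F₀(t)` of degree at most `[κ : ℓ] e = [E : ℓ((t))]`. Two such steps, from `k` to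
`k((x))` and from `k((x))` to `k((x))((t))`, use only the elements of `k`, `x` and `t`.
-/

section CompleteRings

open IsLocalRing Polynomial

theorem isAdicComplete_of_finite {A : Type*} [CommRing A] [IsNoetherianRing A] (I : Ideal A)
    [IsAdicComplete I A] (M : Type*) [AddCommGroup M] [Module A M] [Module.Finite A M] :
    IsAdicComplete I M := by
  have hausdorff : IsHausdorff I M :=
    IsHausdorff.of_le_jacobson I M (IsAdicComplete.le_jacobson_bot I)
  rw [← AdicCompletion.of_bijective_iff]
  refine ⟨AdicCompletion.of_injective_iff.2 hausdorff, fun z => ?_⟩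
  obtain ⟨w, rfl⟩ := AdicCompletion.ofTensorProduct_surjective_of_finite I M z
  induction w with
  | zero => exact ⟨0, by simp only [map_zero]⟩
  | add w₁ w₂ h₁ h₂ =>
    obtain ⟨x₁, hx₁⟩ := h₁
    obtain ⟨x₂, hx₂⟩ := h₂
    exact ⟨x₁ + x₂, by rw [map_add, map_add, hx₁, hx₂]⟩
  | tmul r x =>
    obtain ⟨a, rfl⟩ := AdicCompletion.of_surjective I A r
    refine ⟨a • x, ?_⟩
    rw [AdicCompletion.ofTensorProduct_tmul, map_smul]
    rfl

theorem isAdicComplete_pow_iff {R : Type*} [CommRing R] (I : Ideal R) {n : ℕ} (hn : n ≠ 0) :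
    IsAdicComplete (I ^ n) R ↔ IsAdicComplete I R := by
  let : WithIdeal R := ⟨I⟩
  have hI : IsAdic I := rfl
  rw [hI.isAdicComplete_iff, (is_ideal_adic_pow hI (Nat.pos_of_ne_zero hn)).isAdicComplete_iff]

theorem isLocalRing_of_isIdempotentElem {R : Type*} [CommRing R] [Nontrivial R]
    [DiscreteTopology (PrimeSpectrum R)] (h : ∀ e : R, IsIdempotentElem e → e = 0 ∨ e = 1) :
    IsLocalRing R := by
  have : Subsingleton (PrimeSpectrum R) := by
    refine ⟨fun 𝔭 𝔮 => ?_⟩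
    obtain ⟨e, he, h𝔭⟩ := PrimeSpectrum.exists_idempotent_basicOpen_eq_of_isClopen
      (isClopen_discrete {𝔭})
    rcases h e he with rfl | rfl
    · simp at h𝔭
    · have h𝔮 : 𝔮 ∈ ({𝔭} : Set (PrimeSpectrum R)) := h𝔭 ▸ by simp
      exact (Set.mem_singleton_iff.1 h𝔮).symm
  have : Subsingleton (MaximalSpectrum R) :=
    MaximalSpectrum.toPrimeSpectrum_injective.subsingleton
  exact IsLocalRing.of_singleton_maximalSpectrum

/- Hensel's lemma for `X ^ 2 - X`, whose derivative `2e - 1` at an idempotent `e` is its own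
inverse. -/
theorem exists_isIdempotentElem_mk_eq {R : Type*} [CommRing R] {I : Ideal R} [HenselianRing R I]
    {e : R ⧸ I} (he : IsIdempotentElem e) :
    ∃ a : R, IsIdempotentElem a ∧ Ideal.Quotient.mk I a = e := by
  obtain ⟨a₀, rfl⟩ := Ideal.Quotient.mk_surjective e
  have hroot : (X ^ 2 - X : R[X]).eval a₀ ∈ I := by
    rw [← Ideal.Quotient.eq_zero_iff_mem]
    simp only [eval_sub, eval_pow, eval_X, map_sub, map_pow]
    rw [pow_two, he.eq, sub_self]
  have hsimple : IsUnit (Ideal.Quotient.mk I ((derivative (X ^ 2 - X : R[X])).eval a₀)) := by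
    refine IsUnit.of_mul_eq_one (2 * Ideal.Quotient.mk I a₀ - 1) ?_
    simp only [map_sub, derivative_X_sq, derivative_X, eval_sub, eval_mul, eval_ofNat, eval_X,
      eval_one, map_mul, map_ofNat, map_one]
    linear_combination 4 * he.eq
  obtain ⟨a, ha, ha₀⟩ := HenselianRing.is_henselian (X ^ 2 - X) (by monicity!) a₀ hroot hsimple
  refine ⟨a, ?_, Ideal.Quotient.eq.2 ha₀⟩
  simpa [IsRoot.def, sub_eq_zero, pow_two, IsIdempotentElem] using ha

theorem isLocalRing_of_henselianRing {R : Type*} [CommRing R] [IsDomain R] {I : Ideal R}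
    [HenselianRing R I] [IsArtinianRing (R ⧸ I)] : IsLocalRing R := by
  have hjac : I ≤ Ideal.jacobson ⊥ := HenselianRing.jac
  have : Nontrivial (R ⧸ I) := Ideal.Quotient.nontrivial_iff.2 fun h =>
    bot_ne_top (Ideal.jacobson_eq_top_iff.1 (top_le_iff.1 (h ▸ hjac)))
  have : IsLocalRing (R ⧸ I) := isLocalRing_of_isIdempotentElem fun e he => by
    obtain ⟨a, ha, rfl⟩ := exists_isIdempotentElem_mk_eq he
    rcases IsIdempotentElem.iff_eq_zero_or_one.1 ha with rfl | rfl
    · exact Or.inl (map_zero _)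
    · exact Or.inr (map_one _)
  have := isLocalHom_of_le_jacobson_bot I hjac
  exact (Ideal.Quotient.mk I).domain_isLocalRing

variable (A B : Type*) [CommRing A] [IsNoetherianRing A] [CommRing B] [Algebra A B]
  [Module.Finite A B]

theorem isAdicComplete_map_of_finite (I : Ideal A) [IsAdicComplete I A] :
    IsAdicComplete (I.map (algebraMap A B)) B :=
  (IsAdicComplete.map_algebraMap_iff I B).2 (isAdicComplete_of_finite I B)

theorem isLocalRing_of_finite [IsDomain B] [IsLocalRing A] [IsAdicComplete (maximalIdeal A) A] :
    IsLocalRing B := by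
  let J := (maximalIdeal A).map (algebraMap A B)
  have : IsAdicComplete J B := isAdicComplete_map_of_finite A B (maximalIdeal A)
  have : Module.Finite (A ⧸ maximalIdeal A) (B ⧸ J) :=
    Module.Finite.of_restrictScalars_finite A _ _
  have : IsArtinianRing (B ⧸ J) := by
    let := Ideal.Quotient.field (maximalIdeal A)
    exact IsArtinianRing.of_finite (A ⧸ maximalIdeal A) (B ⧸ J)
  exact isLocalRing_of_henselianRing (I := J)

end CompleteRings

section DiscreteValuationRings

open IsLocalRing Polynomial

theorem exists_pow_eq_of_sub_one_mem {R : Type*} [CommRing R] {I : Ideal R} [HenselianRing R I]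
    {n : ℕ} (hn : n ≠ 0) (hn' : IsUnit (n : R)) {w : R} (hw : w - 1 ∈ I) : ∃ v : R, v ^ n = w := by
  obtain ⟨v, hv, -⟩ := HenselianRing.is_henselian (I := I) (X ^ n - C w)
    (monic_X_pow_sub_C _ hn) 1 (by simpa using I.neg_mem hw)
    (by simpa [derivative_X_pow] using hn'.map (Ideal.Quotient.mk I))
  exact ⟨v, by simpa [sub_eq_zero] using hv⟩

theorem exists_residue_section (ℓ B : Type*) [Field ℓ] [PerfectField ℓ] [CommRing B]
    [IsLocalRing B] [Algebra ℓ B] [Module.Finite ℓ (ResidueField B)]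
    [IsAdicComplete (maximalIdeal B) B] :
    ∃ σ : ResidueField B →ₐ[ℓ] B, ∀ c, residue B (σ c) = c := by
  have : Algebra.FormallySmooth ℓ (ResidueField B) := .of_perfectField
  obtain ⟨σ, hσ⟩ := Algebra.FormallySmooth.exists_mkₐ_comp_eq_of_isAdicComplete
    (I := maximalIdeal B) (AlgHom.id ℓ (ResidueField B))
  exact ⟨σ, DFunLike.congr_fun hσ⟩

theorem exists_eq_section_mul_pow {B : Type*} [CommRing B] [IsLocalRing B]
    [HenselianRing B (maximalIdeal B)] {σ : ResidueField B →+* B}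
    (hσ : ∀ c, residue B (σ c) = c) {n : ℕ} (hn : n ≠ 0) (hn' : IsUnit (n : B)) (w : Bˣ) :
    ∃ (c : ResidueField B) (v : Bˣ), c ≠ 0 ∧ (w : B) = σ c * v ^ n := by
  have hc : residue B w ≠ 0 := (w.isUnit.map _).ne_zero
  have hσc : σ (residue B w) * σ (residue B w)⁻¹ = 1 := by
    rw [← map_mul, mul_inv_cancel₀ hc, map_one]
  obtain ⟨v, hv⟩ := exists_pow_eq_of_sub_one_mem (I := maximalIdeal B) hn hn'
    (w := σ (residue B w)⁻¹ * w) (by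
      rw [← residue_eq_zero_iff, map_sub, map_mul, hσ, inv_mul_cancel₀ hc, map_one, sub_self])
  have hv_unit : IsUnit v := by
    rw [← isUnit_pow_iff hn, hv]
    exact (IsUnit.of_mul_eq_one_right _ hσc).mul w.isUnit
  exact ⟨_, hv_unit.unit, hc, by rw [hv_unit.unit_spec, hv, ← mul_assoc, hσc, one_mul]⟩

variable {A B : Type*} [CommRing A] [CommRing B] [Algebra A B]

theorem subalgebra_eq_top_of_forall_dvd_sub [Module.Finite A B] {I : Ideal A}
    (hI : I ≤ Ideal.jacobson ⊥) (S : Subalgebra A B) {ϖ : B} (hϖ : ϖ ∈ S) {e : ℕ}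
    (hϖe : ϖ ^ e ∈ I.map (algebraMap A B)) (hS : ∀ b : B, ∃ a ∈ S, ϖ ∣ b - a) : S = ⊤ := by
  have expansion : ∀ (n : ℕ) (b : B), ∃ a ∈ S, ϖ ^ n ∣ b - a := by
    intro n
    induction n with
    | zero => exact fun b => ⟨0, S.zero_mem, by simp⟩
    | succ n ih =>
      intro b
      obtain ⟨a, ha, d, hd⟩ := ih b
      obtain ⟨a', ha', d', hd'⟩ := hS d
      refine ⟨a + ϖ ^ n * a', add_mem ha (mul_mem (pow_mem hϖ n) ha'), d', ?_⟩
      linear_combination hd + ϖ ^ n * hd'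
  rw [← Algebra.toSubmodule_eq_top, eq_top_iff]
  refine Submodule.le_of_le_smul_of_le_jacobson_bot Module.Finite.fg_top hI fun b _ => ?_
  obtain ⟨a, ha, hb⟩ := expansion e b
  rw [← sub_add_cancel b a, add_comm, Ideal.smul_top_eq_map]
  exact Submodule.add_mem_sup ha (Ideal.mem_of_dvd _ hb hϖe)

variable [IsDomain B] [IsDiscreteValuationRing B]

theorem ramification_mul_finrank_residueField [IsDomain A] [Module.Finite A B] [Module.Flat A B]
    {𝔭 : Ideal A} [h𝔭 : 𝔭.IsMaximal] {e : ℕ}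
    (h𝔭e : 𝔭.map (algebraMap A B) = maximalIdeal B ^ e) [(maximalIdeal B).LiesOver 𝔭] :
    e * Module.finrank (A ⧸ 𝔭) (B ⧸ maximalIdeal B) = Module.finrank A B := by
  have primesOver_eq : 𝔭.primesOver B = {maximalIdeal B} := by
    ext 𝔮
    refine ⟨fun ⟨_, h⟩ => ?_, fun h => ?_⟩
    · have : maximalIdeal B ≤ 𝔮 := Ideal.IsPrime.le_of_pow_le
        (h𝔭e ▸ Ideal.map_le_of_le_comap (Ideal.over_def 𝔮 𝔭).le : maximalIdeal B ^ e ≤ 𝔮)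
      exact ((maximalIdeal.isMaximal B).eq_of_le (Ideal.IsPrime.ne_top ‹_›) this).symm
    · rw [Set.mem_singleton_iff.1 h]
      exact ⟨inferInstance, inferInstance⟩
  let : Unique (𝔭.primesOver B) := primesOver_eq ▸ Set.uniqueSingleton _
  have key := Ideal.sum_ramification_inertia_eq_finrank 𝔭 B
  have hdefault : (default : 𝔭.primesOver B).1 = maximalIdeal B :=
    Set.mem_singleton_iff.1 (primesOver_eq ▸ (default : 𝔭.primesOver B).2)
  have h𝔪e : maximalIdeal B ^ e ≠ ⊥ := pow_ne_zero e (IsDiscreteValuationRing.not_a_field B)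
  rw [Fintype.sum_unique, hdefault, Ideal.inertiaDeg_eq_of_isMaximal 𝔭,
    Ideal.IsDedekindDomain.ramificationIdx_eq_multiplicity 𝔭 _ (h𝔭e ▸ h𝔪e), h𝔭e,
    multiplicity_pow_self_of_prime] at key
  · exact key
  · exact Ideal.prime_of_isPrime (IsDiscreteValuationRing.not_a_field B) inferInstance

end DiscreteValuationRings

section FractionField

open IsLocalRing

theorem exists_map_maximalIdeal_eq_pow {A B : Type*} [CommRing A] [IsLocalRing A] [CommRing B]
    [IsDomain B] [IsDiscreteValuationRing B] [Algebra A B] [FaithfulSMul A B]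
    [Algebra.IsIntegral A B] (hA : ¬ IsField A) :
    ∃ e ≠ 0, (maximalIdeal A).map (algebraMap A B) = maximalIdeal B ^ e := by
  have hinj := FaithfulSMul.algebraMap_injective A B
  have : (maximalIdeal A).map (algebraMap A B) ≠ ⊥ := by
    rw [Ne, Ideal.map_eq_bot_iff_of_injective hinj]
    exact fun h => hA (isField_iff_maximalIdeal_eq.2 h)
  obtain ⟨ϖ, hϖ⟩ := IsDiscreteValuationRing.exists_irreducible B
  obtain ⟨e, he⟩ := IsDiscreteValuationRing.ideal_eq_span_pow_irreducible this hϖ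
  rw [← Ideal.span_singleton_pow, ← hϖ.maximalIdeal_eq] at he
  refine ⟨e, ?_, he⟩
  rintro rfl
  have : IsLocalHom (algebraMap A B) := inferInstance
  have hle := ((local_hom_TFAE (algebraMap A B)).out 0 2).1 this
  rw [he, pow_zero, Ideal.one_eq_top, top_le_iff] at hle
  exact (maximalIdeal.isMaximal B).ne_top hle

theorem isAdicComplete_maximalIdeal_of_finite {A B : Type*} [CommRing A] [IsNoetherianRing A]
    [IsLocalRing A] [IsAdicComplete (maximalIdeal A) A] [CommRing B] [IsDomain B]
    [IsDiscreteValuationRing B] [Algebra A B] [FaithfulSMul A B] [Module.Finite A B]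
    (hA : ¬ IsField A) : IsAdicComplete (maximalIdeal B) B := by
  obtain ⟨e, he, hmap⟩ := exists_map_maximalIdeal_eq_pow (B := B) hA
  rw [← isAdicComplete_pow_iff _ he, ← hmap]
  exact isAdicComplete_map_of_finite A B (maximalIdeal A)

variable {B : Type*} [CommRing B] [IsDomain B] [IsDiscreteValuationRing B]
  {σ : ResidueField B →+* B}
  {E : Type*} [Field E] [Algebra B E] [IsFractionRing B E]

theorem adjoin_insert_range_section_eq_top {A : Type*} (K : Type*) [CommRing A] [Field K]
    [Algebra A B] [Module.Finite A B] [Algebra A K] [Algebra K E] [Algebra A E]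
    [IsScalarTower A B E] [IsScalarTower A K E] {I : Ideal A} (hI : I ≤ Ideal.jacobson ⊥)
    {e : ℕ} (hIe : I.map (algebraMap A B) = maximalIdeal B ^ e)
    (hσ : ∀ c, residue B (σ c) = c) {ϖ : B} (hϖ : Irreducible ϖ) :
    IntermediateField.adjoin K (insert (algebraMap B E ϖ) (Set.range ((algebraMap B E).comp σ))) =
      ⊤ := by
  set L := IntermediateField.adjoin K
    (insert (algebraMap B E ϖ) (Set.range ((algebraMap B E).comp σ)))
  let S : Subalgebra A B :=
    (L.toSubalgebra.restrictScalars A).comap (IsScalarTower.toAlgHom A B E)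
  have hϖS : ϖ ∈ S := IntermediateField.subset_adjoin K _ (Set.mem_insert _ _)
  have hσS (c : ResidueField B) : σ c ∈ S :=
    IntermediateField.subset_adjoin K _ (Set.mem_insert_of_mem _ ⟨c, rfl⟩)
  have hS : S = ⊤ := by
    refine subalgebra_eq_top_of_forall_dvd_sub hI S hϖS (e := e) ?_ fun b =>
      ⟨_, hσS (residue B b), ?_⟩
    · rw [hIe]
      exact Ideal.pow_mem_pow hϖ.not_isUnit e
    · rw [← Ideal.mem_span_singleton, ← hϖ.maximalIdeal_eq, ← residue_eq_zero_iff, map_sub, hσ,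
        sub_self]
  rw [eq_top_iff]
  intro x _
  obtain ⟨a, b, -, rfl⟩ := IsFractionRing.div_surjective (A := B) x
  have mem_L (y : B) : algebraMap B E y ∈ L := (hS ▸ Algebra.mem_top : y ∈ S)
  exact div_mem (mem_L a) (mem_L b)

variable [HenselianRing B (maximalIdeal B)]

theorem exists_irreducible_pow_eq_section_mul (hσ : ∀ c, residue B (σ c) = c) {e : ℕ} (he : e ≠ 0)
    (he' : IsUnit (e : B)) {T : B} (hT : Ideal.span {T} = maximalIdeal B ^ e) :
    ∃ (ϖ : B) (u : ResidueField B), Irreducible ϖ ∧ u ≠ 0 ∧ ϖ ^ e = σ u * T := by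
  obtain ⟨ϖ, hϖ⟩ := IsDiscreteValuationRing.exists_irreducible B
  rw [hϖ.maximalIdeal_eq, Ideal.span_singleton_pow, Ideal.span_singleton_eq_span_singleton] at hT
  obtain ⟨w, hw⟩ := hT
  obtain ⟨c, v, hc, hcv⟩ := exists_eq_section_mul_pow hσ he he' w⁻¹
  have hTw : T = σ c * (v * ϖ) ^ e := by
    rw [mul_pow, ← mul_assoc, ← hcv, ← hw, mul_comm T, Units.inv_mul_cancel_left]
  refine ⟨v * ϖ, c⁻¹, (irreducible_units_mul v).2 hϖ, inv_ne_zero hc, ?_⟩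
  rw [hTw, ← mul_assoc, ← map_mul, inv_mul_cancel₀ hc, map_one, one_mul]

theorem exists_eq_section_mul_zpow_mul_pow (hσ : ∀ c, residue B (σ c) = c) {ϖ : B}
    (hϖ : Irreducible ϖ) {n : ℕ} (hn : n ≠ 0) (hn' : IsUnit (n : B)) (w : E) :
    ∃ (c : ResidueField B) (m : ℤ) (v : E),
      w = algebraMap B E (σ c) * algebraMap B E ϖ ^ m * v ^ n := by
  rcases eq_or_ne w 0 with rfl | hw
  · exact ⟨0, 0, 0, by simp only [map_zero, zero_mul]⟩
  obtain ⟨m, b, hb⟩ := IsDiscreteValuationRing.exists_units_eq_smul_zpow_of_irreducible hϖ hw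
  obtain ⟨c, v, -, hcv⟩ := exists_eq_section_mul_pow hσ hn hn' b
  refine ⟨c, m, algebraMap B E v, ?_⟩
  rw [hb, Units.smul_def, Algebra.smul_def, hcv, map_mul, map_pow]
  ring

end FractionField

section LaurentSeries

open IsLocalRing

theorem finrank_powerSeries_quotient_maximalIdeal (ℓ : Type*) [Field ℓ] :
    Module.finrank ℓ (PowerSeries ℓ ⧸ maximalIdeal (PowerSeries ℓ)) = 1 := by
  refine finrank_eq_one_iff'.2 ⟨1, one_ne_zero, fun z => ?_⟩
  obtain ⟨a, rfl⟩ := Ideal.Quotient.mk_surjective z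
  refine ⟨PowerSeries.constantCoeff a, ?_⟩
  rw [← map_one (Ideal.Quotient.mk _), ← Ideal.Quotient.mkₐ_eq_mk ℓ, ← map_smul,
    Ideal.Quotient.mkₐ_eq_mk, Ideal.Quotient.eq, PowerSeries.maximalIdeal_eq_span_X,
    Ideal.mem_span_singleton, PowerSeries.X_dvd_iff]
  simp

theorem isAdicComplete_maximalIdeal_powerSeries (ℓ : Type*) [Field ℓ] :
    IsAdicComplete (maximalIdeal (PowerSeries ℓ)) (PowerSeries ℓ) := by
  rw [PowerSeries.maximalIdeal_eq_span_X]
  infer_instance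

/-- A presentation of a finite extension `E` of `ℓ((t))` by a coefficient field and a uniformizer.
The field `κ` plays the role of the residue field of `E`, embedded into `E` by `σ` compatibly with
`ℓ ⊆ ℓ((t))`; the uniformizer `s` satisfies the Kummer-type equation `s ^ e = u t` with `u ∈ κ`;
together they generate `E`, and every element of `E` is a monomial `c s ^ m` up to `N`-th powers. -/
structure IsLaurentPresentation (ℓ : Type*) {κ E : Type*} [Field ℓ] [Field κ] [Field E]
    [Algebra ℓ κ] [Algebra (LaurentSeries ℓ) E] (σ : κ →+* E) (s : E) (e : ℕ) (u : κ) : Prop where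
  finite : FiniteDimensional ℓ κ
  map_algebraMap (a : ℓ) : σ (algebraMap ℓ κ a) = algebraMap (LaurentSeries ℓ) E (HahnSeries.C a)
  ramification_ne_zero : e ≠ 0
  unit_ne_zero : u ≠ 0
  pow_eq : s ^ e = σ u * algebraMap (LaurentSeries ℓ) E (HahnSeries.single 1 1)
  finrank_mul : Module.finrank ℓ κ * e = Module.finrank (LaurentSeries ℓ) E
  adjoin_eq_top : IntermediateField.adjoin (LaurentSeries ℓ) (insert s (Set.range σ)) = ⊤
  exists_eq_mul_pow (w : E) (N : ℕ) : N ≠ 0 → ∃ (c : κ) (m : ℤ) (v : E), w = σ c * s ^ m * v ^ N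

theorem IsLaurentPresentation.mul {ℓ κ E : Type*} [Field ℓ] [Field κ] [Field E]
    [Algebra ℓ κ] [Algebra (LaurentSeries ℓ) E] {σ : κ →+* E} {s : E} {e : ℕ} {u v : κ}
    (h : IsLaurentPresentation ℓ σ s e u) (hv : v ≠ 0) :
    IsLaurentPresentation ℓ σ (s * σ v) e (u * v ^ e) where
  finite := h.finite
  map_algebraMap := h.map_algebraMap
  ramification_ne_zero := h.ramification_ne_zero
  unit_ne_zero := mul_ne_zero h.unit_ne_zero (pow_ne_zero e hv)
  pow_eq := by
    rw [mul_pow, h.pow_eq, map_mul, map_pow]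
    ring
  finrank_mul := h.finrank_mul
  adjoin_eq_top := by
    have hσv : σ v ≠ 0 := (map_ne_zero σ).2 hv
    rw [eq_top_iff, ← h.adjoin_eq_top, IntermediateField.adjoin_le_iff]
    set L := IntermediateField.adjoin (LaurentSeries ℓ) (insert (s * σ v) (Set.range σ))
    have hσ (c : κ) : σ c ∈ L :=
      IntermediateField.subset_adjoin _ _ (Set.mem_insert_of_mem _ ⟨c, rfl⟩)
    have hs : s * σ v ∈ L := IntermediateField.subset_adjoin _ _ (Set.mem_insert _ _)
    refine Set.insert_subset ?_ (Set.range_subset_iff.2 hσ)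
    rw [← mul_div_cancel_right₀ s hσv]
    exact div_mem hs (hσ v)
  exists_eq_mul_pow w N hN := by
    obtain ⟨c, m, x, hx⟩ := h.exists_eq_mul_pow w N hN
    refine ⟨c * (v ^ m)⁻¹, m, x, ?_⟩
    have hσv : σ v ^ m ≠ 0 := zpow_ne_zero m ((map_ne_zero σ).2 hv)
    rw [hx, map_mul, map_inv₀, map_zpow₀, mul_zpow]
    field_simp

section IntegralModel

variable (ℓ B : Type*) [Field ℓ] [CommRing B] [IsDomain B] [IsDiscreteValuationRing B]
  [Algebra (PowerSeries ℓ) B] [Module.Finite (PowerSeries ℓ) B] [FaithfulSMul (PowerSeries ℓ) B]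
  [Algebra ℓ B] [IsScalarTower ℓ (PowerSeries ℓ) B]

theorem isScalarTower_residueField :
    IsScalarTower ℓ (PowerSeries ℓ ⧸ maximalIdeal (PowerSeries ℓ)) (B ⧸ maximalIdeal B) :=
  have : IsScalarTower ℓ (PowerSeries ℓ) (B ⧸ maximalIdeal B) :=
    .of_algebraMap_eq fun a => congrArg (Ideal.Quotient.mk (maximalIdeal B))
      (IsScalarTower.algebraMap_apply ℓ (PowerSeries ℓ) B a)
  .to₁₃₄ ℓ (PowerSeries ℓ) _ _

theorem finite_residueField_of_finite_powerSeries : Module.Finite ℓ (ResidueField B) := by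
  have : Module.Finite ℓ (PowerSeries ℓ ⧸ maximalIdeal (PowerSeries ℓ)) :=
    Module.finite_of_finrank_eq_succ (finrank_powerSeries_quotient_maximalIdeal ℓ)
  have : Module.Finite (PowerSeries ℓ ⧸ maximalIdeal (PowerSeries ℓ)) (B ⧸ maximalIdeal B) :=
    Module.Finite.of_restrictScalars_finite (PowerSeries ℓ) _ _
  have := isScalarTower_residueField ℓ B
  change Module.Finite ℓ (B ⧸ maximalIdeal B)
  exact .trans (PowerSeries ℓ ⧸ maximalIdeal (PowerSeries ℓ)) _

variable (E : Type*) [Field E] [Algebra (LaurentSeries ℓ) E] [Algebra (PowerSeries ℓ) E]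
  [IsScalarTower (PowerSeries ℓ) (LaurentSeries ℓ) E] [Algebra B E]
  [IsScalarTower (PowerSeries ℓ) B E] [IsFractionRing B E]

theorem finrank_residueField_mul_eq_finrank {e : ℕ}
    (he : (maximalIdeal (PowerSeries ℓ)).map (algebraMap (PowerSeries ℓ) B) = maximalIdeal B ^ e) :
    Module.finrank ℓ (ResidueField B) * e = Module.finrank (LaurentSeries ℓ) E := by
  let := Ideal.Quotient.field (maximalIdeal (PowerSeries ℓ))
  have := isScalarTower_residueField ℓ B
  have htower : Module.finrank ℓ (B ⧸ maximalIdeal B) =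
      Module.finrank (PowerSeries ℓ ⧸ maximalIdeal (PowerSeries ℓ)) (B ⧸ maximalIdeal B) := by
    rw [← Module.finrank_mul_finrank ℓ (PowerSeries ℓ ⧸ maximalIdeal (PowerSeries ℓ)),
      finrank_powerSeries_quotient_maximalIdeal, one_mul]
  rw [IsFractionRing.finrank_eq (PowerSeries ℓ) (LaurentSeries ℓ) B E,
    ← ramification_mul_finrank_residueField he, mul_comm]
  exact congrArg (e * ·) htower

theorem exists_isLaurentPresentation_residueField [CharZero ℓ] :
    ∃ (σ : ResidueField B →+* E) (s : E) (e : ℕ) (u : ResidueField B),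
      IsLaurentPresentation ℓ σ s e u := by
  have := finite_residueField_of_finite_powerSeries ℓ B
  have := isAdicComplete_maximalIdeal_powerSeries ℓ
  have := isAdicComplete_maximalIdeal_of_finite (B := B)
    (IsDiscreteValuationRing.not_isField (PowerSeries ℓ))
  have : HenselianRing B (maximalIdeal B) := inferInstance
  have natCast_isUnit (n : ℕ) (hn : n ≠ 0) : IsUnit (n : B) := by
    rw [← map_natCast (algebraMap ℓ B)]
    exact (IsUnit.mk0 (n : ℓ) (Nat.cast_ne_zero.2 hn)).map _
  obtain ⟨e, he, hmap⟩ := exists_map_maximalIdeal_eq_pow (B := B)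
    (IsDiscreteValuationRing.not_isField (PowerSeries ℓ))
  obtain ⟨σ, hσ⟩ := exists_residue_section ℓ B
  let T := algebraMap (PowerSeries ℓ) B PowerSeries.X
  have hT : Ideal.span {T} = maximalIdeal B ^ e := by
    rw [← hmap, PowerSeries.maximalIdeal_eq_span_X, Ideal.map_span, Set.image_singleton]
  obtain ⟨ϖ, u, hϖ, hu, hpow⟩ :=
    exists_irreducible_pow_eq_section_mul (σ := σ) hσ he (natCast_isUnit e he) hT
  have algebraMap_eq (f : PowerSeries ℓ) : algebraMap B E (algebraMap (PowerSeries ℓ) B f) =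
      algebraMap (LaurentSeries ℓ) E (HahnSeries.ofPowerSeries ℤ ℓ f) := by
    rw [← IsScalarTower.algebraMap_apply (PowerSeries ℓ) B E,
      IsScalarTower.algebraMap_apply (PowerSeries ℓ) (LaurentSeries ℓ) E]
    rfl
  refine ⟨(algebraMap B E).comp σ, algebraMap B E ϖ, e, u, ‹_›, fun a => ?_, he, hu, ?_,
    finrank_residueField_mul_eq_finrank ℓ B E hmap,
    adjoin_insert_range_section_eq_top _ (IsAdicComplete.le_jacobson_bot _) hmap hσ hϖ,
    fun w N hN => exists_eq_section_mul_zpow_mul_pow hσ hϖ hN (natCast_isUnit N hN) w⟩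
  · rw [← HahnSeries.ofPowerSeries_C, ← algebraMap_eq]
    exact congrArg (algebraMap B E) ((σ.commutes a).trans
      (IsScalarTower.algebraMap_apply ℓ (PowerSeries ℓ) B a))
  · rw [← map_pow, hpow, map_mul, algebraMap_eq, HahnSeries.ofPowerSeries_X]
    rfl

end IntegralModel

theorem exists_isLaurentPresentation.{u, v} (ℓ : Type u) (E : Type v) [Field ℓ] [CharZero ℓ]
    [Field E] [Algebra (LaurentSeries ℓ) E] [FiniteDimensional (LaurentSeries ℓ) E] :
    ∃ (κ : Type v) (_ : Field κ) (_ : Algebra ℓ κ) (σ : κ →+* E) (s : E) (e : ℕ) (u : κ),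
      IsLaurentPresentation ℓ σ s e u := by
  let : Algebra (PowerSeries ℓ) E :=
    ((algebraMap (LaurentSeries ℓ) E).comp (algebraMap (PowerSeries ℓ) (LaurentSeries ℓ))).toAlgebra
  have : IsScalarTower (PowerSeries ℓ) (LaurentSeries ℓ) E := .of_algebraMap_eq' rfl
  have := charZero_of_injective_ringHom (HahnSeries.C_injective (Γ := ℤ) (R := ℓ))
  let B := integralClosure (PowerSeries ℓ) E
  have : Module.Finite (PowerSeries ℓ) B :=
    IsIntegralClosure.finite (PowerSeries ℓ) (LaurentSeries ℓ) E B
  have : IsFractionRing B E :=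
    integralClosure.isFractionRing_of_finite_extension (LaurentSeries ℓ) E
  have : IsDedekindDomain B := integralClosure.isDedekindDomain (PowerSeries ℓ) (LaurentSeries ℓ) E
  have := isAdicComplete_maximalIdeal_powerSeries ℓ
  have : IsLocalRing B := isLocalRing_of_finite (PowerSeries ℓ) B
  have : FaithfulSMul (PowerSeries ℓ) E := .trans _ (LaurentSeries ℓ) _
  have : FaithfulSMul (PowerSeries ℓ) B := .tower_bot _ _ E
  have hB : ¬ IsField B := fun h =>
    IsDiscreteValuationRing.not_isField (PowerSeries ℓ) (isField_of_isIntegral_of_isField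
      (FaithfulSMul.algebraMap_injective (PowerSeries ℓ) B) h)
  have : IsDiscreteValuationRing B :=
    ((IsDiscreteValuationRing.TFAE B hB).out 0 2).2 (inferInstance : IsDedekindDomain B)
  let : Algebra ℓ B := ((algebraMap (PowerSeries ℓ) B).comp (algebraMap ℓ _)).toAlgebra
  have : IsScalarTower ℓ (PowerSeries ℓ) B := .of_algebraMap_eq' rfl
  exact ⟨_, _, _, exists_isLaurentPresentation_residueField ℓ B E⟩

end LaurentSeries

section Descent

open IntermediateField

/-- Every finite extension `E` of `K` descends to `F`, in a form that lifts to Laurent series: it is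
generated over `K` by a finite extension `M` of `F` of degree at most `[E : K]`, and every element
of `E` can be multiplied into `M` by an `N`-th power. The degree bound forces `M ⊗[F] K ≃ₐ[K] E`;
the last property lets radicals of elements of `E` be replaced by radicals of elements of `M`. -/
def FiniteExtensionsDescend.{w, u, v} (F : Type u) (K : Type v) [Field F] [Field K] [Algebra F K] :
    Prop :=
  ∀ (E : Type w) [Field E] [Algebra K E] [Algebra F E] [IsScalarTower F K E]
    [FiniteDimensional K E], ∃ M : IntermediateField F E,
      FiniteDimensional F M ∧ Module.finrank F M ≤ Module.finrank K E ∧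
      adjoin K (M : Set E) = ⊤ ∧
      ∀ (w : E) (N : ℕ), N ≠ 0 → ∃ c ∈ M, ∃ v : E, w = c * v ^ N

theorem FiniteExtensionsDescend.refl (k : Type*) [Field k] : FiniteExtensionsDescend k k := by
  intro E _ algK algF _ _
  obtain rfl : algK = algF := Algebra.algebra_ext _ _ fun r => by
    exact (@IsScalarTower.algebraMap_apply k k E _ _ _ _ algK algF _ r).symm
  refine ⟨⊤, inferInstance, finrank_top'.le, ?_, fun w N _ => ⟨w, mem_top, 1, by simp⟩⟩
  rw [coe_top, adjoin_univ]

theorem exists_intermediateField_of_pow_mem {F E : Type*} [Field F] [Field E] [Algebra F E]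
    (L : IntermediateField F E) [FiniteDimensional F L] {z : E} {n : ℕ} (hn : n ≠ 0)
    (hz : z ^ n ∈ L) : ∃ L' : IntermediateField F E, L ≤ L' ∧ z ∈ L' ∧
      FiniteDimensional F L' ∧ Module.finrank F L' ≤ Module.finrank F L * n := by
  open Polynomial in
  have hroot : aeval z (X ^ n - C ⟨z ^ n, hz⟩ : L[X]) = 0 := by
    simp only [map_sub, map_pow, aeval_X, aeval_C, IntermediateField.algebraMap_apply, sub_self]
  have hmonic := Polynomial.monic_X_pow_sub_C (⟨z ^ n, hz⟩ : L) hn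
  have hint : IsIntegral L z := ⟨_, hmonic, hroot⟩
  have := adjoin.finiteDimensional hint
  have hdeg : Module.finrank L L⟮z⟯ ≤ n := by
    rw [adjoin.finrank hint]
    exact (Polynomial.natDegree_le_of_dvd (minpoly.dvd L z hroot) hmonic.ne_zero).trans
      Polynomial.natDegree_X_pow_sub_C.le
  refine ⟨L⟮z⟯.restrictScalars F, fun x hx => L⟮z⟯.algebraMap_mem ⟨x, hx⟩,
    mem_adjoin_simple_self L z, Module.Finite.trans (R := F) L L⟮z⟯, ?_⟩
  have : Module.Free L L⟮z⟯ := .of_divisionRing L L⟮z⟯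
  exact (Module.finrank_mul_finrank F L L⟮z⟯).ge.trans (Nat.mul_le_mul_left _ hdeg)

theorem finrank_adjoin_le_of_intermediateField {F₀ E : Type*} (F : Type*) [Field F₀] [Field F]
    [Field E] [Algebra F₀ F] [Algebra F E] [Algebra F₀ E] [IsScalarTower F₀ F E]
    (L : IntermediateField F₀ E) [FiniteDimensional F₀ L] :
    FiniteDimensional F (adjoin F (L : Set E)) ∧
      Module.finrank F (adjoin F (L : Set E)) ≤ Module.finrank F₀ L := by
  have hrank := adjoin_rank_le_of_isAlgebraic_right F L
  have hfin : FiniteDimensional F (adjoin F (L : Set E)) :=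
    Module.rank_lt_aleph0_iff.1 (hrank.trans_lt (Module.rank_lt_aleph0 F₀ L))
  refine ⟨hfin, ?_⟩
  rwa [← Module.finrank_eq_rank, ← Module.finrank_eq_rank, Nat.cast_le] at hrank

section Presentation

variable {F₀ ℓ F κ E : Type*} [Field F₀] [Field ℓ] [Field F] [Field κ] [Field E]
  [Algebra F₀ ℓ] [Algebra F₀ F] [Algebra F (LaurentSeries ℓ)]
  [Algebra ℓ κ] [Algebra F₀ κ] [IsScalarTower F₀ ℓ κ]
  [Algebra (LaurentSeries ℓ) E] [Algebra F E] [IsScalarTower F (LaurentSeries ℓ) E]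
  {σ : κ →+* E} {s : E} {e : ℕ} {u : κ}

theorem IsLaurentPresentation.exists_intermediateField (h : IsLaurentPresentation ℓ σ s e u)
    (hC : ∀ a, algebraMap F (LaurentSeries ℓ) (algebraMap F₀ F a) =
      HahnSeries.C (algebraMap F₀ ℓ a))
    (ht : HahnSeries.single 1 1 ∈ (algebraMap F (LaurentSeries ℓ)).range)
    (M : IntermediateField F₀ κ) [FiniteDimensional F₀ M] (hu : u ∈ M)
    (hM : Module.finrank F₀ M ≤ Module.finrank ℓ κ) :
    ∃ L : IntermediateField F E, FiniteDimensional F L ∧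
      Module.finrank F L ≤ Module.finrank (LaurentSeries ℓ) E ∧ s ∈ L ∧ ∀ c ∈ M, σ c ∈ L := by
  let : Algebra F₀ E := ((algebraMap F E).comp (algebraMap F₀ F)).toAlgebra
  have : IsScalarTower F₀ F E := .of_algebraMap_eq' rfl
  let τ : κ →ₐ[F₀] E :=
    { σ with
      commutes' := fun a => by
        change σ (algebraMap F₀ κ a) = algebraMap F E (algebraMap F₀ F a)
        rw [IsScalarTower.algebraMap_apply F₀ ℓ κ, h.map_algebraMap,
          IsScalarTower.algebraMap_apply F (LaurentSeries ℓ) E, hC] }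
  have : FiniteDimensional F₀ (M.map τ) := Module.Finite.equiv (M.equivMap τ).toLinearEquiv
  obtain ⟨hfin, hrank⟩ := finrank_adjoin_le_of_intermediateField F (M.map τ)
  have mem_adjoin (c : κ) (hc : c ∈ M) : σ c ∈ adjoin F (M.map τ : Set E) :=
    subset_adjoin F _ ⟨c, hc, rfl⟩
  have hpow : s ^ e ∈ adjoin F (M.map τ : Set E) := by
    obtain ⟨t, ht⟩ := ht
    rw [h.pow_eq, ← ht, ← IsScalarTower.algebraMap_apply]
    exact mul_mem (mem_adjoin u hu) (IntermediateField.algebraMap_mem _ t)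
  obtain ⟨L, hL, hsL, hfinL, hrankL⟩ :=
    exists_intermediateField_of_pow_mem _ h.ramification_ne_zero hpow
  refine ⟨L, hfinL, ?_, hsL, fun c hc => hL (mem_adjoin c hc)⟩
  calc Module.finrank F L ≤ Module.finrank F (adjoin F (M.map τ : Set E)) * e := hrankL
    _ ≤ Module.finrank F₀ (M.map τ) * e := Nat.mul_le_mul_right e hrank
    _ = Module.finrank F₀ M * e := by rw [(M.equivMap τ).toLinearEquiv.finrank_eq]
    _ ≤ Module.finrank ℓ κ * e := Nat.mul_le_mul_right e hM
    _ = Module.finrank (LaurentSeries ℓ) E := h.finrank_mul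

theorem IsLaurentPresentation.adjoin_eq_top_of_subset (h : IsLaurentPresentation ℓ σ s e u)
    {X : Set κ} (hX : adjoin ℓ X = ⊤) {Y : Set E} (hs : s ∈ Y) (hσ : ∀ c ∈ X, σ c ∈ Y) :
    adjoin (LaurentSeries ℓ) Y = ⊤ := by
  let L : IntermediateField ℓ κ :=
    ((adjoin (LaurentSeries ℓ) Y).toSubfield.comap σ).toIntermediateField fun a => by
      change σ _ ∈ adjoin (LaurentSeries ℓ) Y
      rw [h.map_algebraMap]
      exact IntermediateField.algebraMap_mem _ _
  have hL : ⊤ ≤ L := by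
    rw [← hX, adjoin_le_iff]
    exact fun c hc => subset_adjoin _ _ (hσ c hc)
  rw [eq_top_iff, ← h.adjoin_eq_top, adjoin_le_iff]
  exact Set.insert_subset (subset_adjoin _ _ hs)
    (Set.range_subset_iff.2 fun c => hL (mem_top : c ∈ ⊤))

end Presentation

theorem FiniteExtensionsDescend.laurentSeries.{w} {F₀ ℓ F : Type*} [Field F₀] [Field ℓ] [CharZero ℓ]
    [Field F] [Algebra F₀ ℓ] [Algebra F₀ F] [Algebra F (LaurentSeries ℓ)]
    (hC : ∀ a, algebraMap F (LaurentSeries ℓ) (algebraMap F₀ F a) =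
      HahnSeries.C (algebraMap F₀ ℓ a))
    (ht : HahnSeries.single 1 1 ∈ (algebraMap F (LaurentSeries ℓ)).range)
    (h₀ : FiniteExtensionsDescend.{w} F₀ ℓ) :
    FiniteExtensionsDescend.{w} F (LaurentSeries ℓ) := by
  intro E _ _ _ _ _
  obtain ⟨κ, _, _, σ, s₁, e, u₁, h₁⟩ := exists_isLaurentPresentation ℓ E
  have := h₁.finite
  let : Algebra F₀ κ := ((algebraMap ℓ κ).comp (algebraMap F₀ ℓ)).toAlgebra
  have : IsScalarTower F₀ ℓ κ := .of_algebraMap_eq' rfl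
  obtain ⟨M, _, hrank, hgen, hpow⟩ := h₀ κ
  obtain ⟨s, u, hu, h⟩ : ∃ s, ∃ u ∈ M, IsLaurentPresentation ℓ σ s e u := by
    obtain ⟨c, hc, v, hcv⟩ := hpow u₁ e h₁.ramification_ne_zero
    have hv : v ≠ 0 := by
      rintro rfl
      exact h₁.unit_ne_zero (by rw [hcv, zero_pow h₁.ramification_ne_zero, mul_zero])
    refine ⟨s₁ * σ v⁻¹, c, hc, ?_⟩
    convert h₁.mul (inv_ne_zero hv) using 1
    rw [hcv, inv_pow, mul_inv_cancel_right₀ (pow_ne_zero e hv)]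
  obtain ⟨L, hfin, hrankL, hs, hσ⟩ := h.exists_intermediateField hC ht M hu hrank
  refine ⟨L, hfin, hrankL, h.adjoin_eq_top_of_subset hgen hs hσ, fun w N hN => ?_⟩
  obtain ⟨c, m, v, hw⟩ := h.exists_eq_mul_pow w N hN
  obtain ⟨c', hc', v', hc⟩ := hpow c N hN
  refine ⟨σ c' * s ^ m, mul_mem (hσ c' hc') (zpow_mem hs m), σ v' * v, ?_⟩
  rw [hw, hc, map_mul, map_pow]
  ring

end Descent

section TensorProduct

variable {F K E : Type*} [Field F] [Field K] [Field E] [Algebra F K] [Algebra K E] [Algebra F E]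
  [IsScalarTower F K E] [FiniteDimensional K E]

theorem nonempty_tensorProduct_algEquiv_of_adjoin_eq_top (M : IntermediateField F E)
    [FiniteDimensional F M] (hrank : Module.finrank F M ≤ Module.finrank K E)
    (hM : IntermediateField.adjoin K (M : Set E) = ⊤) :
    Nonempty ((M ⊗[F] K) ≃ₐ[K] E) := by
  let φ : K ⊗[F] M →ₐ[K] E := Algebra.TensorProduct.productLeftAlgHom (Algebra.ofId K E) M.val
  have hsurj : Function.Surjective φ := by
    rw [← AlgHom.range_eq_top, eq_top_iff, ← IntermediateField.top_toSubalgebra, ← hM,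
      IntermediateField.adjoin_toSubalgebra_of_isAlgebraic
        fun x _ => Algebra.IsAlgebraic.isAlgebraic x, Algebra.adjoin_le_iff]
    exact fun x hx => ⟨1 ⊗ₜ ⟨x, hx⟩, by simp [φ]⟩
  have hbij : Function.Bijective φ :=
    OrzechProperty.bijective_of_surjective_of_finrank_le φ.toLinearMap hsurj
      (by rwa [Module.finrank_baseChange])
  exact ⟨(Algebra.TensorProduct.commRight F K M).symm.trans (.ofBijective φ hbij)⟩

end TensorProduct

theorem FiniteExtensionsDescend.iteratedLaurentSeries.{w} {k F : Type*} [Field k] [CharZero k]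
    [Field F] [Algebra F (LaurentSeries (LaurentSeries k))]
    (hC : ∀ a : k, HahnSeries.C (HahnSeries.C a) ∈
      (algebraMap F (LaurentSeries (LaurentSeries k))).range)
    (hx : HahnSeries.C (HahnSeries.single 1 1) ∈
      (algebraMap F (LaurentSeries (LaurentSeries k))).range)
    (ht : HahnSeries.single 1 1 ∈ (algebraMap F (LaurentSeries (LaurentSeries k))).range) :
    FiniteExtensionsDescend.{w} F (LaurentSeries (LaurentSeries k)) := by
  have := charZero_of_injective_ringHom (HahnSeries.C_injective (Γ := ℤ) (R := k))
  let R := (algebraMap F (LaurentSeries (LaurentSeries k))).fieldRange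
  let F₀ : Subfield (LaurentSeries k) := R.comap HahnSeries.C
  let : Algebra k F₀ := (RingHom.codRestrict HahnSeries.C F₀ hC).toAlgebra
  let toRange : F₀ →+* R := (HahnSeries.C.comp F₀.subtype).codRestrict R fun a => a.2
  let rangeEquiv : F ≃+* R := RingHom.rangeRestrictFieldEquiv _
  let : Algebra F₀ F := ((rangeEquiv.symm : R →+* F).comp toRange).toAlgebra
  have descends_inner : FiniteExtensionsDescend.{w} F₀ (LaurentSeries k) :=
    (FiniteExtensionsDescend.refl k).laurentSeries (fun _ => rfl) ⟨⟨_, hx⟩, rfl⟩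
  exact descends_inner.laurentSeries
    (fun a => congrArg Subtype.val (rangeEquiv.apply_symm_apply (toRange a))) ht

theorem lsMap_single {R S : Type*} [CommRing R] [CommRing S] (f : R →+* S) (n : ℤ) (a : R) :
    lsMap f (HahnSeries.single n a) = HahnSeries.single n (f a) :=
  HahnSeries.map_single (ZeroHomClass.toZeroHom f)

theorem branch_descent_char_zero_general.{w} {k F : Type*} [Field k] [CharZero k] [Field F]
    (ψ : F →+* LaurentSeries (LaurentSeries k))
    (hC : ∀ a : k, HahnSeries.C (HahnSeries.C a) ∈ ψ.range)
    (hx : HahnSeries.C (HahnSeries.single 1 1) ∈ ψ.range)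
    (ht : HahnSeries.single 1 1 ∈ ψ.range)
    (E : Type w) [Field E] [Algebra (LaurentSeries (LaurentSeries k)) E]
    [FiniteDimensional (LaurentSeries (LaurentSeries k)) E] :
    letI : Algebra F (LaurentSeries (LaurentSeries k)) := ψ.toAlgebra
    ∃ (E' : Type w) (_ : Field E') (_ : Algebra F E'), FiniteDimensional F E' ∧
      Nonempty ((E' ⊗[F] LaurentSeries (LaurentSeries k))
        ≃ₐ[LaurentSeries (LaurentSeries k)] E) := by
  let : Algebra F (LaurentSeries (LaurentSeries k)) := ψ.toAlgebra
  let : Algebra F E := ((algebraMap (LaurentSeries (LaurentSeries k)) E).comp ψ).toAlgebra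
  have : IsScalarTower F (LaurentSeries (LaurentSeries k)) E := .of_algebraMap_eq' rfl
  obtain ⟨M, hfin, hrank, hgen, -⟩ := FiniteExtensionsDescend.iteratedLaurentSeries hC hx ht E
  exact ⟨M, inferInstance, inferInstance, hfin,
    nonempty_tensorProduct_algEquiv_of_adjoin_eq_top M hrank hgen⟩

/-- In equal characteristic zero, every finite field extension of `k((x))((t))` is
induced by a finite field extension of `k((t))(x)`, where `k((t))(x)` embeds into
`k((x))((t))` by sending `t` to `t` and `x` to `x` (i.e. coefficientwise on `k((t))`,
with the variable mapped to `x ∈ k((x))`). -/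
theorem branch_descent_char_zero
    (k : Type) [Field k] [CharZero k]
    (ψ : RatFunc (LaurentSeries k) →+* LaurentSeries (Kx k))
    (hψC : ∀ a : LaurentSeries k,
      ψ (RatFunc.C a) = lsMap ((HahnSeries.C : k →+* Kx k)) a)
    (hψX : ψ RatFunc.X = HahnSeries.C ((HahnSeries.single (1 : ℤ) (1 : k) : Kx k)))
    (E : Type) [Field E] [Algebra (LaurentSeries (Kx k)) E]
    [FiniteDimensional (LaurentSeries (Kx k)) E] :
    letI : Algebra (RatFunc (LaurentSeries k)) (LaurentSeries (Kx k)) := ψ.toAlgebra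
    ∃ (E' : Type) (_ : Field E') (_ : Algebra (RatFunc (LaurentSeries k)) E'),
      FiniteDimensional (RatFunc (LaurentSeries k)) E' ∧
      Nonempty ((E' ⊗[RatFunc (LaurentSeries k)] LaurentSeries (Kx k))
        ≃ₐ[LaurentSeries (Kx k)] E) := by
  let : Algebra (LaurentSeries (LaurentSeries k)) E := ‹Algebra (LaurentSeries (Kx k)) E›
  have : FiniteDimensional (LaurentSeries (LaurentSeries k)) E :=
    ‹FiniteDimensional (LaurentSeries (Kx k)) E›
  exact branch_descent_char_zero_general (k := k) ψ
    (fun a => ⟨RatFunc.C (HahnSeries.C a), (hψC _).trans (lsMap_single _ 0 a)⟩)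
    ⟨RatFunc.X, hψX⟩
    ⟨RatFunc.C (HahnSeries.single 1 1),
      (hψC _).trans ((lsMap_single _ 1 1).trans (congrArg _ (map_one _)))⟩ E
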